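/- arXiv:2303.15941 — 7 statements merged into one kernel-verified Lean document; each statement's English description precedes it below -/
import Mathlib

section
/- For every integer n ≥ 2, there is no v ∈ ℂ such that S_n(v) = S_{n−1}(v) = S_{n−2}(v). -/
open Polynomial

/-- The normalized Chebyshev polynomials of the second kind. -/
noncomputable def S : ℕ → Polynomial ℂ
  | 0 => 1
  | 1 => Polynomial.X
  | (k+2) => Polynomial.X * S (k+1) - S k

/-- The quadratic form `a ^ 2 + b ^ 2 - v * a * b` is invariant under the recurrence
step `(a, b) ↦ (b, v * b - a)`, and it equals `1` on the initial pair `(1, v)`. Hence three equal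
consecutive values `a` would satisfy both `a * (2 - v) = 0` and `a ^ 2 * (2 - v) = 1`. -/
theorem S_eval_invariant (v : ℂ) (k : ℕ) :
    (S k).eval v ^ 2 + (S (k + 1)).eval v ^ 2 - v * (S k).eval v * (S (k + 1)).eval v = 1 := by
  induction k with
  | zero => simp [S]; ring
  | succ k ih =>
    simp only [S, eval_sub, eval_mul, eval_X]
    linear_combination ih

theorem stmt_3 (n : ℕ) (hn : 2 ≤ n) :
    ¬ ∃ v : ℂ, (S n).eval v = (S (n - 1)).eval v ∧ (S (n - 1)).eval v = (S (n - 2)).eval v := by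
  rintro ⟨v, h1, h2⟩
  obtain ⟨k, rfl⟩ := Nat.exists_eq_add_of_le' hn
  have inv := S_eval_invariant v k
  simp only [Nat.add_sub_cancel, show k + 2 - 1 = k + 1 from rfl] at h1 h2
  simp only [S, eval_sub, eval_mul, eval_X] at h1
  rw [h2] at h1 inv
  have h : (0 : ℂ) = 1 := by linear_combination inv + (S k).eval v * h1
  exact zero_ne_one h
end

section
/- For every integer n ≥ 2, the geometric component of the SL₂(ℂ)-character variety of the odd twisted Whitehead link W_{2n−1} is a smooth surface in ℂ³: there is no point (x,y,z) ∈ ℂ³ at which the polynomial f_n and all three of its formal partial derivatives ∂f_n/∂x, ∂f_n/∂y, ∂f_n/∂z vanish simultaneously. -/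
/-!
Write `n = m + 2`, `P = S_{n-1} - S_{n-2}` and `Q = S_n - S_{n-2}`, so that `f_n = xy P(v) - z Q(v)`.
With `G = xy P'(v) - z Q'(v)`, the gradient of `f_n` is
`(y P + (2x - yz) G, x P + (2y - xz) G, -Q + (2z - xy) G)`.
At a singular point `x ∂ₓf - y ∂ᵧf = 2 (x² - y²) G` vanishes. Let `a = S_{n-1}(v)` and
`b = S_{n-2}(v)`; the conserved quantity `a² + b² - v a b = 1` of the Chebyshev recursion
gives a contradiction in every case.

* If `G = 0`, then `Q = 0`, which forces `P ≠ 0`, hence `x = y = 0`. Then `z Q'(v) = 0`, and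
  `Q' = n S_{n-1}` does not vanish at a root of `Q`, so `z = 0` and `v = -2`, where `Q ≠ 0`.
* If `G ≠ 0`, then `y = ±x`, and the symmetry `(x, y, z) ↦ (x, -y, -z)` reduces this to `y = x`.
  If `x = 0`, again `z = 0` and `v = -2`. Otherwise `P = (z - 2) G` and `Q = (2z - x²) G`;
  together with `x² P = z Q` this gives `x² (z - 1) = z²`, whence `v + 2 = x²`, i.e.
  `v = t + t⁻¹` for `t = z - 1`. The equation `f_n = 0` becomes `(t - 1)(t a - b) = 0`.
  Here `t a = b` contradicts the conserved quantity, and `t = 1` gives `v = 2` and `P = 0`.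
-/

open MvPolynomial

/-- The polynomial `v = x² + y² + z² − xyz − 2` in `ℂ[x,y,z]`. -/
noncomputable def vP : MvPolynomial (Fin 3) ℂ :=
  X 0 ^ 2 + X 1 ^ 2 + X 2 ^ 2 - X 0 * X 1 * X 2 - 2

/-- The defining polynomial `f_n = xy·S_{n−1}(v) − (xy − z)·S_{n−2}(v) − z·S_n(v)` of the
geometric component of the character variety of the twisted Whitehead link `W_{2n−1}`. -/
noncomputable def fTW (n : ℕ) : MvPolynomial (Fin 3) ℂ :=
  X 0 * X 1 * Polynomial.aeval vP (S (n - 1))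
    - (X 0 * X 1 - X 2) * Polynomial.aeval vP (S (n - 2))
    - X 2 * Polynomial.aeval vP (S n)

/-- The quadratic form conserved by the Chebyshev recursion. -/
theorem S_conserved (v : ℂ) (m : ℕ) :
    (S (m + 1)).eval v ^ 2 + (S m).eval v ^ 2
      - v * (S (m + 1)).eval v * (S m).eval v = 1 := by
  induction m with
  | zero => simp [S]; ring
  | succ m ih =>
    rw [← ih, show S (m + 1 + 1) = Polynomial.X * S (m + 1) - S m from rfl]
    simp only [Polynomial.eval_sub, Polynomial.eval_mul, Polynomial.eval_X]
    ring

/-- `S_n - S_{n-2}` is the rescaled Chebyshev polynomial of the first kind, whose derivative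
is `n S_{n-1}`. -/
theorem derivative_S_sub (m : ℕ) :
    Polynomial.derivative (S (m + 2) - S m) = ((m : Polynomial ℂ) + 2) * S (m + 1) := by
  induction m using Nat.twoStepInduction with
  | zero => simp [S]; ring
  | one => simp [S]; ring
  | more m ih0 ih1 =>
    have h : S (m + 2 + 2) - S (m + 2)
        = Polynomial.X * (S (m + 1 + 2) - S (m + 1)) - (S (m + 2) - S m) := by
      rw [show S (m + 2 + 2) = Polynomial.X * S (m + 3) - S (m + 2) from rfl]
      nth_rw 2 [show S (m + 2) = Polynomial.X * S (m + 1) - S m from rfl]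
      ring
    rw [h, Polynomial.derivative_sub, Polynomial.derivative_mul, ih0, ih1,
      Polynomial.derivative_X, show S (m + 1 + 2) = Polynomial.X * S (m + 2) - S (m + 1) from rfl,
      show S (m + 1 + 1) = S (m + 2) from rfl]
    push_cast
    ring

theorem eval_aeval_vP (p : Fin 3 → ℂ) (s : Polynomial ℂ) :
    eval p (Polynomial.aeval vP s) = s.eval (eval p vP) := by
  rw [Polynomial.aeval_def, Polynomial.hom_eval₂, Polynomial.eval]
  congr 1
  ext c
  simp [MvPolynomial.algebraMap_eq]

theorem fTW_eq (m : ℕ) : fTW (m + 2) =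
    X 0 * X 1 * Polynomial.aeval vP (S (m + 1) - S m)
      - X 2 * Polynomial.aeval vP (S (m + 2) - S m) := by
  simp only [fTW, map_sub, show m + 2 - 1 = m + 1 from rfl, show m + 2 - 2 = m from rfl]
  ring

theorem pderiv_aeval_vP (i : Fin 3) (s : Polynomial ℂ) :
    pderiv i (Polynomial.aeval vP s)
      = Polynomial.aeval vP (Polynomial.derivative s) * pderiv i vP := by
  rw [Derivation.map_aeval, smul_eq_mul]

/-- The case `y = x`, `G ≠ 0`. -/
theorem no_singular_diag {x z v a b G : ℂ} (hv : v = x ^ 2 + x ^ 2 + z ^ 2 - x * x * z - 2)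
    (hI : a ^ 2 + b ^ 2 - v * a * b = 1) (hG : G ≠ 0)
    (hf : x * x * (a - b) - z * (v * a - 2 * b) = 0)
    (hx : x * (a - b) + (2 * x - x * z) * G = 0)
    (hz : -(v * a - 2 * b) + (2 * z - x * x) * G = 0) : False := by
  by_cases hx0 : x = 0
  · subst hx0
    have h1 : z * z * G = 0 := by linear_combination (-hf + z * hz) / 2
    have hz0 : z = 0 := by simpa [hG] using h1
    subst hz0
    have hv2 : v = -2 := by rw [hv]; ring
    subst hv2
    have hab : a + b = 0 := by linear_combination hz / 2
    exact one_ne_zero (α := ℂ) (by linear_combination -hI + (a + b) * hab)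
  · have hP : (a - b) + (2 - z) * G = 0 :=
      mul_left_cancel₀ hx0 (by linear_combination hx)
    have hxz : x ^ 2 * (z - 1) = z ^ 2 := by
      apply mul_right_cancel₀ hG
      linear_combination (hf - x ^ 2 * hP - z * hz) / 2
    have hz0 : z ≠ 0 := by
      rintro rfl
      exact hx0 (by simpa using hxz)
    have hvx : v + 2 = x ^ 2 := by rw [hv]; linear_combination -hxz
    have hvz : (v + 2) * (z - 1) = z ^ 2 := by rw [hvx, hxz]
    have key : (z - 2) * ((z - 1) * a - b) = 0 := by
      apply mul_left_cancel₀ hz0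
      -- `(z - 1) * hf` is `z ^ 2 * (a - b) - z * ((t ^ 2 + 1) * a - 2 * t * b)` for `t = z - 1`
      linear_combination -(z - 1) * hf + (a - b) * hxz - z * a * hvz
    rcases mul_eq_zero.mp key with h | h
    · have hz2 : z = 2 := by linear_combination h
      subst hz2
      have hv2 : v = 2 := by linear_combination hvz
      subst hv2
      have hab : a - b = 0 := by linear_combination hP
      exact one_ne_zero (α := ℂ) (by linear_combination -hI + (a - b) * hab)
    · have hb : b = (z - 1) * a := by linear_combination -h
      subst hb
      exact one_ne_zero (α := ℂ) (by linear_combination -hI - a ^ 2 * hvz)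

/-- The elimination argument: `P'`, `a`, `b` stand for `P'(v)`, `S_{n-1}(v)`, `S_{n-2}(v)`, while
`N * a` with `N = n` stands for `Q'(v)`. -/
theorem no_singular {x y z v a b P' N : ℂ} (hN : N ≠ 0)
    (hv : v = x ^ 2 + y ^ 2 + z ^ 2 - x * y * z - 2)
    (hI : a ^ 2 + b ^ 2 - v * a * b = 1)
    (hf : x * y * (a - b) - z * (v * a - 2 * b) = 0)
    (hx : y * (a - b) + (2 * x - y * z) * (x * y * P' - z * (N * a)) = 0)
    (hy : x * (a - b) + (2 * y - x * z) * (x * y * P' - z * (N * a)) = 0)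
    (hz : -(v * a - 2 * b) + (2 * z - x * y) * (x * y * P' - z * (N * a)) = 0) : False := by
  by_cases hG : x * y * P' - z * (N * a) = 0
  · simp only [hG, mul_zero, add_zero] at hx hy hz
    have hP : a - b ≠ 0 := by
      intro h
      have hb : b = a := by linear_combination -h
      subst hb
      exact one_ne_zero (α := ℂ) (by linear_combination -hI + b * hz)
    have hy0 : y = 0 := by simpa [hP] using hx
    have hx0 : x = 0 := by simpa [hP] using hy
    subst hy0 hx0
    have ha : a ≠ 0 := by
      rintro rfl
      exact one_ne_zero (α := ℂ) (by linear_combination -hI + b / 2 * hz)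
    have hz0 : z = 0 := by simpa [hN, ha] using hG
    subst hz0
    have hv2 : v = -2 := by rw [hv]; ring
    subst hv2
    exact one_ne_zero (α := ℂ) (by linear_combination -hI + (a + b) / 2 * hz)
  · generalize x * y * P' - z * (N * a) = G at *
    have hxy : (x - y) * (x + y) = 0 := by
      apply mul_right_cancel₀ hG
      linear_combination (x * hx - y * hy) / 2
    rcases mul_eq_zero.mp hxy with h | h
    · have : y = x := by linear_combination -h
      subst this
      exact no_singular_diag hv hI hG hf hx (by linear_combination hz)
    · have : y = -x := by linear_combination h
      subst this
      -- the symmetry `(x, y, z) ↦ (x, -y, -z)` changes the sign of `f` and of `G`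
      refine no_singular_diag (z := -z) (G := -G) (by rw [hv]; ring) hI (neg_ne_zero.mpr hG)
        (by linear_combination -hf) (by linear_combination -hx) (by linear_combination hz)

theorem stmt_4 (n : ℕ) (hn : 2 ≤ n) :
    ¬ ∃ p : Fin 3 → ℂ,
      eval p (fTW n) = 0 ∧ ∀ i : Fin 3, eval p (pderiv i (fTW n)) = 0 := by
  rintro ⟨p, hf, hd⟩
  obtain ⟨m, rfl⟩ := Nat.exists_eq_add_of_le' hn
  rw [fTW_eq] at hf
  simp only [fTW_eq] at hd
  have hQ : (S (m + 2) - S m).eval (eval p vP)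
      = eval p vP * (S (m + 1)).eval (eval p vP) - 2 * (S m).eval (eval p vP) := by
    rw [show S (m + 2) = Polynomial.X * S (m + 1) - S m from rfl]
    simp only [Polynomial.eval_sub, Polynomial.eval_mul, Polynomial.eval_X]
    ring
  have hQ' : (Polynomial.derivative (S (m + 2) - S m)).eval (eval p vP)
      = ((m : ℂ) + 2) * (S (m + 1)).eval (eval p vP) := by
    rw [derivative_S_sub]
    simp
  have hv : eval p vP = p 0 ^ 2 + p 1 ^ 2 + p 2 ^ 2 - p 0 * p 1 * p 2 - 2 := by simp [vP]
  have h2C (i : Fin 3) : pderiv i (2 : MvPolynomial (Fin 3) ℂ) = 0 :=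
    Derivation.map_natCast (pderiv i) 2
  have hv0 : eval p (pderiv 0 vP) = 2 * p 0 - p 1 * p 2 := by
    simp [vP, pderiv_X, Derivation.leibniz_pow, h2C]
    ring
  have hv1 : eval p (pderiv 1 vP) = 2 * p 1 - p 0 * p 2 := by
    simp [vP, pderiv_X, Derivation.leibniz_pow, h2C]
    ring
  have hv2 : eval p (pderiv 2 vP) = 2 * p 2 - p 0 * p 1 := by
    simp [vP, pderiv_X, Derivation.leibniz_pow, h2C]
  have hP : (S (m + 1) - S m).eval (eval p vP)
      = (S (m + 1)).eval (eval p vP) - (S m).eval (eval p vP) := Polynomial.eval_sub ..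
  have hI := S_conserved (eval p vP) m
  have h0 := hd 0
  have h1 := hd 1
  have h2 := hd 2
  generalize S (m + 2) - S m = Q at *
  generalize S (m + 1) - S m = P at *
  simp only [map_sub, Derivation.leibniz, pderiv_aeval_vP, smul_eq_mul, map_add, map_mul, eval_X,
    eval_aeval_vP, hv0, hv1, hv2, hQ, hQ', hP, pderiv_X, Pi.single_apply] at hf h0 h1 h2
  simp at h0 h1 h2
  have hN : (m : ℂ) + 2 ≠ 0 := by exact_mod_cast (Nat.succ_ne_zero (m + 1))
  exact no_singular (P' := P.derivative.eval (eval p vP)) hN hv hI hf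
    (by linear_combination h0) (by linear_combination h1) (by linear_combination h2)
end

section
/- For every c ∈ ℂ with c ≠ 2 and c ≠ −2, the surface {(x,y,z) ∈ ℂ³ : x² + y² + z² − xyz − 2 = c} is smooth: there is no point (x,y,z) on it satisfying 2x − yz = 2y − xz = 2z − xy = 0. In particular, taking c = 2·cos(lπ/n) for 1 ≤ l ≤ n−1, every non-geometric component of the SL₂(ℂ)-character variety of the twisted Whitehead link W_{2n−1} is a smooth surface in ℂ³. -/
/-- A singular point satisfies `2x² = 2y² = 2z² = xyz`. Either it is the origin, where the level
is `-2`, or `x² = y² = z² = 4` and `xyz = 8`, where the level is `12 - 8 - 2 = 2`. -/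
theorem level_eq_of_critical {x y z : ℂ} (hx : 2 * x - y * z = 0) (hy : 2 * y - x * z = 0)
    (hz : 2 * z - x * y = 0) :
    x ^ 2 + y ^ 2 + z ^ 2 - x * y * z - 2 = 2 ∨ x ^ 2 + y ^ 2 + z ^ 2 - x * y * z - 2 = -2 := by
  have h : x * (z ^ 2 - 4) = 0 := by linear_combination -2 * hx - z * hy
  rcases mul_eq_zero.mp h with h0 | h4
  · right
    subst h0
    have hy0 : y = 0 := by linear_combination hy / 2
    have hz0 : z = 0 := by linear_combination hz / 2
    simp [hy0, hz0]
  · left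
    -- Here `x² + y² + z² - xyz = z²`, since `2x² = 2y² = xyz`.
    linear_combination x / 2 * hx + y / 2 * hy + h4

theorem stmt_5 :
    (∀ c : ℂ, c ≠ 2 → c ≠ -2 →
      ¬ ∃ x y z : ℂ, x ^ 2 + y ^ 2 + z ^ 2 - x * y * z - 2 = c ∧
        2 * x - y * z = 0 ∧ 2 * y - x * z = 0 ∧ 2 * z - x * y = 0) ∧
    (∀ n l : ℕ, 2 ≤ n → 1 ≤ l → l ≤ n - 1 →
      ¬ ∃ x y z : ℂ,
        x ^ 2 + y ^ 2 + z ^ 2 - x * y * z - 2 = ((2 * Real.cos (l * Real.pi / n) : ℝ) : ℂ) ∧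
        2 * x - y * z = 0 ∧ 2 * y - x * z = 0 ∧ 2 * z - x * y = 0) := by
  have main : ∀ c : ℂ, c ≠ 2 → c ≠ -2 →
      ¬ ∃ x y z : ℂ, x ^ 2 + y ^ 2 + z ^ 2 - x * y * z - 2 = c ∧
        2 * x - y * z = 0 ∧ 2 * y - x * z = 0 ∧ 2 * z - x * y = 0 := by
    rintro c h2 hm2 ⟨x, y, z, rfl, hx, hy, hz⟩
    exact (level_eq_of_critical hx hy hz).elim h2 hm2
  refine ⟨main, fun n l hn hl hln => ?_⟩
  -- The angle `lπ/n` lies strictly between `0` and `π`, so its cosine is neither `1` nor `-1`.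
  have hn0 : (0 : ℝ) < n := by exact_mod_cast (by omega : 0 < n)
  have hl0 : (0 : ℝ) < l := by exact_mod_cast (by omega : 0 < l)
  have hlt : (l : ℝ) < n := by exact_mod_cast (by omega : l < n)
  have hpos : 0 < l * Real.pi / n := by positivity
  have hltpi : l * Real.pi / n < Real.pi := by
    rw [div_lt_iff₀ hn0]
    nlinarith [Real.pi_pos]
  have hsin := Real.sin_pos_of_pos_of_lt_pi hpos hltpi
  have hsq := Real.sin_sq_add_cos_sq (l * Real.pi / n)
  apply main
  · intro h
    have h' : 2 * Real.cos (l * Real.pi / n) = 2 := by exact_mod_cast h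
    nlinarith
  · intro h
    have h' : 2 * Real.cos (l * Real.pi / n) = -2 := by exact_mod_cast h
    nlinarith
end

section
/- Let n ≥ 1 be an integer and let a ∈ ℂ with a ≠ 0 and a^{4n} ≠ −1. Set x := a + a⁻¹ and z := x·(a^{4n−1} + a)/(a^{4n} + 1). Then z² − x²·z + x² = −x²·(a − a⁻¹)²·a^{4n}/(a^{4n} + 1)². In particular, if moreover a⁴ ≠ 1, then z² − x²·z + x² ≠ 0. -/
/-!
Write `A = a ^ (4 * n)` and `w = (A * a⁻¹ + a) / (A + 1)`, so that `z = x * w`. Since `x = a + a⁻¹`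
is the sum of two numbers with product `1`,
`z ^ 2 - x ^ 2 * z + x ^ 2 = x ^ 2 * (w ^ 2 - x * w + 1) = x ^ 2 * (w - a) * (w - a⁻¹)`,
and both factors are explicit: `w - a = -A * (a - a⁻¹) / (A + 1)` and
`w - a⁻¹ = (a - a⁻¹) / (A + 1)`. For the non-vanishing, `a * x = a ^ 2 + 1` and
`a * (a - a⁻¹) = a ^ 2 - 1` are the two factors of `a ^ 4 - 1`.
-/

theorem stmt_6 (n : ℕ) (hn : 1 ≤ n) (a : ℂ) (ha : a ≠ 0) (h4n : a ^ (4 * n) ≠ -1)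
    (x z : ℂ) (hx : x = a + a⁻¹) (hz : z = x * (a ^ (4 * n - 1) + a) / (a ^ (4 * n) + 1)) :
    z ^ 2 - x ^ 2 * z + x ^ 2 =
      -x ^ 2 * (a - a⁻¹) ^ 2 * a ^ (4 * n) / (a ^ (4 * n) + 1) ^ 2 ∧
    (a ^ 4 ≠ 1 → z ^ 2 - x ^ 2 * z + x ^ 2 ≠ 0) := by
  have hA1 : a ^ (4 * n) + 1 ≠ 0 := fun h => h4n (eq_neg_of_add_eq_zero_left h)
  have hA0 : a ^ (4 * n) ≠ 0 := pow_ne_zero _ ha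
  have hpow : a ^ (4 * n - 1) = a ^ (4 * n) * a⁻¹ := by
    rw [pow_sub₀ a ha (by omega), pow_one]
  rw [hpow] at hz
  have key : z ^ 2 - x ^ 2 * z + x ^ 2 =
      -x ^ 2 * (a - a⁻¹) ^ 2 * a ^ (4 * n) / (a ^ (4 * n) + 1) ^ 2 := by
    generalize a ^ (4 * n) = A at *
    obtain ⟨w, hw⟩ : ∃ w, w = (A * a⁻¹ + a) / (A + 1) := ⟨_, rfl⟩
    have hzw : z = x * w := by rw [hz, hw, mul_div_assoc]
    have h₁ : w - a = -A * (a - a⁻¹) / (A + 1) := by rw [hw]; field_simp; ring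
    have h₂ : w - a⁻¹ = (a - a⁻¹) / (A + 1) := by rw [hw]; field_simp; ring
    calc z ^ 2 - x ^ 2 * z + x ^ 2 = x ^ 2 * (w ^ 2 - x * w + 1) := by rw [hzw]; ring
      _ = x ^ 2 * ((w - a) * (w - a⁻¹)) := by
        rw [hx]; linear_combination (-(a + a⁻¹) ^ 2) * mul_inv_cancel₀ ha
      _ = -x ^ 2 * (a - a⁻¹) ^ 2 * A / (A + 1) ^ 2 := by rw [h₁, h₂]; field_simp
  refine ⟨key, fun h4 => ?_⟩
  have hprod : a ^ 2 * (x * (a - a⁻¹)) = a ^ 4 - 1 := by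
    rw [hx]; field_simp; ring
  have hne : x * (a - a⁻¹) ≠ 0 := fun h => h4 (by linear_combination -hprod + a ^ 2 * h)
  rw [key]
  refine div_ne_zero (mul_ne_zero ?_ hA0) (pow_ne_zero 2 hA1)
  rw [neg_mul, ← mul_pow]
  exact neg_ne_zero.mpr (pow_ne_zero 2 hne)
end

section
/- For each j ∈ ℕ, the polynomial S_{j+1}(X) − S_j(X) − 1 is divisible by X − 2 in ℂ[X]; let P_j ∈ ℂ[X] be the unique polynomial with (X−2)·P_j(X) = S_{j+1}(X) − S_j(X) − 1. Then for all integers n ≥ 2 and k with 1 ≤ k ≤ n−1, one has (2·cos(kπ/n) − 2)·P_{n−2}(2·cos(kπ/n)) = (−1)^k − 1. In particular P_{n−2}(2·cos(kπ/n)) = 0 if k is even, and P_{n−2}(2·cos(kπ/n)) ≠ 0 if k is odd. -/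
/-!
Divisibility by `X - 2` holds because `S j` takes the value `j + 1` at `2`. The evaluation at
`2 cos θ` with `θ = kπ/n` rests on the identity `S_j(2 cos θ) sin θ = sin ((j + 1) θ)`. Since
`nθ = kπ` and `sin θ ≠ 0`, it gives `S_{n-1}(2 cos θ) = 0` and
`S_{n-2}(2 cos θ) = -(-1)^k`, so `S_{n-1} - S_{n-2} - 1` evaluates to `(-1)^k - 1`. As
`sin θ ≠ 0` also forces `2 cos θ ≠ 2`, the vanishing of `P_{n-2}(2 cos θ)` is equivalent to that
of `(-1)^k - 1`.
-/

open Polynomial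

lemma S_eval_two (j : ℕ) : (S j).eval 2 = (j : ℂ) + 1 := by
  induction j using Nat.twoStepInduction with
  | zero => simp [S]
  | one => norm_num [S]
  | more k h0 h1 =>
    rw [S, eval_sub, eval_mul, eval_X, h0, h1]
    push_cast
    ring

lemma S_eval_two_cos_mul_sin (θ : ℂ) (j : ℕ) :
    (S j).eval (2 * Complex.cos θ) * Complex.sin θ = Complex.sin ((j + 1) * θ) := by
  induction j using Nat.twoStepInduction with
  | zero => simp [S]
  | one =>
    have h : ((1 : ℕ) + 1 : ℂ) * θ = 2 * θ := by norm_num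
    rw [h, Complex.sin_two_mul, S, eval_X]
    ring
  | more k h0 h1 =>
    have e2 : (((k + 2 : ℕ) : ℂ) + 1) * θ = ((k + 1 : ℕ) + 1 : ℂ) * θ + θ := by
      push_cast; ring
    have e0 : ((k : ℂ) + 1) * θ = ((k + 1 : ℕ) + 1 : ℂ) * θ - θ := by
      push_cast; ring
    rw [e0, Complex.sin_sub] at h0
    rw [e2, Complex.sin_add, S, eval_sub, eval_mul, eval_X]
    linear_combination 2 * Complex.cos θ * h1 - h0

theorem stmt_16 :
    (∀ j : ℕ, (Polynomial.X - Polynomial.C 2) ∣ (S (j + 1) - S j - 1)) ∧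
    (∀ P : ℕ → Polynomial ℂ,
      (∀ j : ℕ, (Polynomial.X - Polynomial.C 2) * P j = S (j + 1) - S j - 1) →
      ∀ n k : ℕ, 2 ≤ n → 1 ≤ k → k ≤ n - 1 →
        (((2 * Real.cos (k * Real.pi / n) : ℝ) : ℂ) - 2) *
            (P (n - 2)).eval ((2 * Real.cos (k * Real.pi / n) : ℝ) : ℂ) = (-1) ^ k - 1 ∧
        (Even k → (P (n - 2)).eval ((2 * Real.cos (k * Real.pi / n) : ℝ) : ℂ) = 0) ∧
        (Odd k → (P (n - 2)).eval ((2 * Real.cos (k * Real.pi / n) : ℝ) : ℂ) ≠ 0)) := by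
  refine ⟨fun j => ?_, fun P hP n k hn hk hkn => ?_⟩
  · rw [dvd_iff_isRoot, IsRoot.def]
    simp [S_eval_two]
  · obtain ⟨m, rfl⟩ : ∃ m, n = m + 2 := ⟨n - 2, by omega⟩
    simp only [Nat.add_sub_cancel]
    set t : ℝ := k * Real.pi / ((m + 2 : ℕ) : ℝ) with ht
    have hm : (0 : ℝ) < ((m + 2 : ℕ) : ℝ) := by positivity
    have hk0 : (0 : ℝ) < k := by exact_mod_cast hk
    have hkm : (k : ℝ) < ((m + 2 : ℕ) : ℝ) := by exact_mod_cast (by omega : k < m + 2)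
    have hnt : ((m + 2 : ℕ) : ℝ) * t = k * Real.pi := by rw [ht]; field_simp
    have hsin : 0 < Real.sin t := by
      apply Real.sin_pos_of_pos_of_lt_pi
      · positivity
      · rw [ht, div_lt_iff₀ hm]
        nlinarith [Real.pi_pos]
    have hs : Complex.sin (t : ℂ) ≠ 0 := by
      rw [← Complex.ofReal_sin]; exact_mod_cast hsin.ne'
    have hx : ((2 * Real.cos t : ℝ) : ℂ) = 2 * Complex.cos t := by push_cast; rfl
    have hntC : ((m : ℂ) + 2) * t = k * Real.pi := by exact_mod_cast hnt
    have h1 : (S (m + 1)).eval (2 * Complex.cos t) = 0 := by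
      have h := S_eval_two_cos_mul_sin t (m + 1)
      have e : (((m + 1 : ℕ) : ℂ) + 1) * t = k * Real.pi := by
        rw [← hntC]; push_cast; ring
      rw [e, Complex.sin_nat_mul_pi] at h
      exact (mul_eq_zero.mp h).resolve_right hs
    have h0 : (S m).eval (2 * Complex.cos t) = -(-1) ^ k := by
      have h := S_eval_two_cos_mul_sin t m
      have e : ((m : ℂ) + 1) * t = k * Real.pi - t := by
        rw [← hntC]; ring
      have hc : Complex.cos (k * Real.pi) = (-1) ^ k := by
        exact_mod_cast congrArg (fun x : ℝ => (x : ℂ)) (Real.cos_nat_mul_pi k)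
      rw [e, Complex.sin_sub, Complex.sin_nat_mul_pi, hc] at h
      apply mul_right_cancel₀ hs
      rw [h]; ring
    have key : (((2 * Real.cos t : ℝ) : ℂ) - 2) * (P m).eval ((2 * Real.cos t : ℝ) : ℂ)
        = (-1) ^ k - 1 := by
      have h := congrArg (eval (2 * Complex.cos (t : ℂ))) (hP m)
      simp only [eval_mul, eval_sub, eval_X, eval_C, eval_one, h0, h1] at h
      rw [hx, h]; ring
    refine ⟨key, fun he => ?_, fun ho h => ?_⟩
    · rw [he.neg_one_pow, sub_self] at key
      refine (mul_eq_zero.mp key).resolve_left fun h => ?_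
      have hcos : Real.cos t = 1 := by
        have h2 : (2 * Real.cos t : ℝ) = 2 := by exact_mod_cast sub_eq_zero.mp h
        linarith
      nlinarith [Real.sin_sq_add_cos_sq t]
    · rw [h, ho.neg_one_pow] at key
      norm_num at key
end

section
/- Define T_k ∈ ℂ[X] by T₀ = 2, T₁ = X, T_{k+2} = X·T_{k+1} − T_k. Let n ≥ 1 be an integer and let v, x, y, z ∈ ℂ. Set d := 2·T_n(v) − v + 2 and assume d ≠ 0, z·d = (T_n(v) + T_{n−1}(v))·(x + y − 2), and (x·y)·d = T_n(v)·(v+2)·(x + y − 2). Then d²·(x² + y² + z² − xyz − 2 − v) = (2 − v)·((T_n(v) + 2)·(x + y) − (v + 2))². -/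
/-!
Write `a = T n v`, `b = T (n - 1) v`, `S = x + y`, `u = S - 2`. The left-hand side depends on `x`, `y`
only through `S` and `x * y`, and the two hypotheses express `z * d` and `x * y * d` through `u`, so
it becomes a quadratic polynomial in `S` whose coefficients involve `a`, `b`, `v`. The invariant
`a² + b² - v a b = 4 - v²` of the Chebyshev recurrence (`T_invariant`) removes `b`, because
`(a + b)² - a (v + 2) (a + b) = (2 + v) (2 - v - a²)`; with `d = 2 a - v + 2` the resulting quadratic
is `(2 - v)` times the stated square.
-/

open Polynomial

/-- The normalized Chebyshev polynomials of the first kind. -/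
noncomputable def T : ℕ → Polynomial ℂ
  | 0 => 2
  | 1 => Polynomial.X
  | (k+2) => Polynomial.X * T (k+1) - T k

/-- The quadratic form `a² + b² - v a b` is preserved by the recurrence step
`(b, a) ↦ (a, v a - b)`, so it keeps its initial value `4 - v²`. -/
lemma T_invariant (v : ℂ) (k : ℕ) :
    (T (k + 1)).eval v ^ 2 + (T k).eval v ^ 2 - v * (T (k + 1)).eval v * (T k).eval v
      = 4 - v ^ 2 := by
  induction k with
  | zero =>
    simp only [T, eval_X, eval_ofNat]
    ring
  | succ k ih =>
    rw [T, eval_sub, eval_mul, eval_X]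
    linear_combination ih

theorem stmt_18 (n : ℕ) (hn : 1 ≤ n) (v x y z d : ℂ)
    (hdef : d = 2 * (T n).eval v - v + 2) (hd : d ≠ 0)
    (hz : z * d = ((T n).eval v + (T (n - 1)).eval v) * (x + y - 2))
    (hxy : x * y * d = (T n).eval v * (v + 2) * (x + y - 2)) :
    d ^ 2 * (x ^ 2 + y ^ 2 + z ^ 2 - x * y * z - 2 - v) =
      (2 - v) * (((T n).eval v + 2) * (x + y) - (v + 2)) ^ 2 := by
  obtain ⟨k, rfl⟩ := Nat.exists_eq_add_of_le' hn
  have h := T_invariant v k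
  rw [Nat.add_sub_cancel] at hz
  set a := (T (k + 1)).eval v
  set b := (T k).eval v
  subst hdef
  -- `hz` and `hxy` rewrite `d² z²`, `d² x y z` and `2 d² x y` in terms of `x + y`; the last term
  -- eliminates `b`.
  linear_combination
    (z * (2 * a - v + 2) + (a + b) * (x + y - 2) - a * (v + 2) * (x + y - 2)) * hz
      - (2 * (2 * a - v + 2) + z * (2 * a - v + 2)) * hxy + (x + y - 2) ^ 2 * h
end

section
/- In the polynomial ring ℂ[x,y,z], the polynomial x·(x − 2)·(x + y − 1)·(x − y − 1) belongs to the ideal generated by the two polynomials f = xyz² − z(x² + y² + z²) + xy + 2z and D = xyz − y² − z² − x + 2. -/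
open MvPolynomial

/-- `f = xyz² − z(x² + y² + z²) + xy + 2z`, the defining polynomial of the component of the
character variety of the Whitehead link containing irreducible characters. -/
noncomputable def fW : MvPolynomial (Fin 3) ℂ :=
  X 0 * X 1 * X 2 ^ 2 - X 2 * (X 0 ^ 2 + X 1 ^ 2 + X 2 ^ 2) + X 0 * X 1 + 2 * X 2

/-- `D = xyz − y² − z² − x + 2`, the trace condition `tr ρ(μ) = tr ρ(μυ)`. -/
noncomputable def DW : MvPolynomial (Fin 3) ℂ :=
  X 0 * X 1 * X 2 - X 1 ^ 2 - X 2 ^ 2 - X 0 + 2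

theorem stmt_19 :
    (X 0 * (X 0 - 2) * (X 0 + X 1 - 1) * (X 0 - X 1 - 1) : MvPolynomial (Fin 3) ℂ) ∈
      Ideal.span ({fW, DW} : Set (MvPolynomial (Fin 3) ℂ)) := by
  -- `f - z D = x g` with `g = y - (x - 1) z`, and modulo `g` one has
  -- `D ≡ (x - 2) (z² - 1)` and `(x - 2) ((x - 1)² - y²) ≡ -(x - 1)² D`.
  -- The exact quotient `h` of `(x - 2) ((x - 1)² - y²) + (x - 1)² D` by `g` is the
  -- coefficient of `f`, and `-x (x - 1)² - z h` that of `D`.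
  refine Ideal.mem_span_pair.mpr
    ⟨(X 0 - 1) ^ 2 * (X 2 - X 1) - (X 0 - 2) * (X 1 + (X 0 - 1) * X 2),
      -X 0 * (X 0 - 1) ^ 2 - X 2 *
        ((X 0 - 1) ^ 2 * (X 2 - X 1) - (X 0 - 2) * (X 1 + (X 0 - 1) * X 2)), ?_⟩
  unfold fW DW
  ring
end
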